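/- Let D be a rich anonymous tree-single-peaked domain for a marriage market with n ≥ 5 men and n women. Then no stable matching rule on D is group strategy-proof. -/

import Mathlib

/-- `r` is a (strict) preference, i.e., a strict total order. -/
def IsPref {X : Type*} (r : X → X → Prop) : Prop := IsStrictTotalOrder X r

/-- `x` is the top (most preferred) element of `r`. -/
def TopOf {X : Type*} (r : X → X → Prop) (x : X) : Prop := ∀ y, y ≠ x → r x y

/-- `a` lies on the (unique) path from `x` to `y` in `G`. -/
def OnPath {X : Type*} (G : SimpleGraph X) (a x y : X) : Prop :=
  ∀ p : G.Walk x y, p.IsPath → a ∈ p.support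

/-- Single-peakedness with respect to a tree `G`. -/
def SPTree {X : Type*} (G : SimpleGraph X) (r : X → X → Prop) : Prop :=
  ∀ t a b, TopOf r t → OnPath G a t b → a = b ∨ r a b

/-- Classical single-peakedness with respect to a strict linear order `lt`. -/
def SPLine {X : Type*} (lt r : X → X → Prop) : Prop :=
  ∀ t x y, TopOf r t → (((x = t ∨ lt t x) ∧ lt x y) ∨ (lt y x ∧ (x = t ∨ lt x t))) → r x y

/-- Richness: every alternative is the top of some admissible preference. -/
def Rich {X : Type*} (D : Set (X → X → Prop)) : Prop := ∀ x, ∃ P ∈ D, TopOf P x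

/-- Top dominance property. -/
def TD {X : Type*} (D : Set (X → X → Prop)) : Prop :=
  ∀ x y z : X, (∃ P ∈ D, P x y ∧ P y z) → ¬ ∃ P ∈ D, P x z ∧ P z y

/-- Rotation property. -/
def Rotation {X : Type*} (D : Set (X → X → Prop)) : Prop :=
  ∀ x y z t : X, (∃ P ∈ D, P x y ∧ P y z ∧ P z t) → ¬ ∃ P ∈ D, P z x ∧ P x t

/-- `G` is a path graph (linear tree) on `k` vertices. -/
def IsPathG {X : Type*} (G : SimpleGraph X) (k : ℕ) : Prop :=
  ∃ e : X ≃ Fin k, ∀ a b, G.Adj a b ↔ ((e a : ℕ) + 1 = e b ∨ (e b : ℕ) + 1 = e a)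

/-- `G` is a star graph: some center adjacent to all other vertices, no other edges. -/
def IsStarG {X : Type*} (G : SimpleGraph X) : Prop :=
  ∃ c, ∀ a b, G.Adj a b ↔ a ≠ b ∧ (a = c ∨ b = c)

/-- A preference relation over the `n` agents of the opposite side. -/
abbrev PrefRel (n : ℕ) := Fin n → Fin n → Prop

/-- A preference profile: one preference (over women) per man, one (over men) per woman. -/
abbrev Profile (n : ℕ) := (Fin n → PrefRel n) × (Fin n → PrefRel n)

/-- Membership in the anonymous product domain with men's set `Dm` and women's set `Dw`. -/
def InDomain {n : ℕ} (Dm Dw : Set (PrefRel n)) (p : Profile n) : Prop :=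
  (∀ m, p.1 m ∈ Dm) ∧ (∀ w, p.2 w ∈ Dw)

/-- Pair `(m, w)` blocks matching `μ` at profile `p`. -/
def Blocks {n : ℕ} (p : Profile n) (μ : Fin n ≃ Fin n) (m w : Fin n) : Prop :=
  p.1 m w (μ m) ∧ p.2 w m (μ.symm w)

/-- Matching `μ` is stable at profile `p`. -/
def StableAt {n : ℕ} (p : Profile n) (μ : Fin n ≃ Fin n) : Prop := ∀ m w, ¬ Blocks p μ m w

/-- The matching rule `φ` is stable on the domain. -/
def StableRule {n : ℕ} (Dm Dw : Set (PrefRel n)) (φ : Profile n → (Fin n ≃ Fin n)) : Prop :=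
  ∀ p, InDomain Dm Dw p → StableAt p (φ p)

/-- Strategy-proofness on the domain: no unilateral in-domain misreport gives a strictly
better match. -/
def SP {n : ℕ} (Dm Dw : Set (PrefRel n)) (φ : Profile n → (Fin n ≃ Fin n)) : Prop :=
  ∀ p, InDomain Dm Dw p →
    (∀ m P', P' ∈ Dm → ¬ p.1 m (φ (Function.update p.1 m P', p.2) m) (φ p m)) ∧
    (∀ w P', P' ∈ Dw → ¬ p.2 w ((φ (p.1, Function.update p.2 w P')).symm w) ((φ p).symm w))

/-- Non-bossiness: a unilateral report change leaving one's own match unchanged leaves the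
whole matching unchanged. -/
def NonBossy {n : ℕ} (Dm Dw : Set (PrefRel n)) (φ : Profile n → (Fin n ≃ Fin n)) : Prop :=
  ∀ p, InDomain Dm Dw p →
    (∀ m P', P' ∈ Dm → φ (Function.update p.1 m P', p.2) m = φ p m →
       φ (Function.update p.1 m P', p.2) = φ p) ∧
    (∀ w P', P' ∈ Dw → (φ (p.1, Function.update p.2 w P')).symm w = (φ p).symm w →
       φ (p.1, Function.update p.2 w P') = φ p)

/-- Man `m` is weakly better off under `μ'` than under `μ` (true preferences from `p`). -/
def MWeakBetter {n : ℕ} (p : Profile n) (μ μ' : Fin n ≃ Fin n) (m : Fin n) : Prop :=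
  μ' m = μ m ∨ p.1 m (μ' m) (μ m)

/-- Woman `w` is weakly better off under `μ'` than under `μ`. -/
def WWeakBetter {n : ℕ} (p : Profile n) (μ μ' : Fin n ≃ Fin n) (w : Fin n) : Prop :=
  μ'.symm w = μ.symm w ∨ p.2 w (μ'.symm w) (μ.symm w)

/-- Group strategy-proofness on the domain. -/
def GSP {n : ℕ} (Dm Dw : Set (PrefRel n)) (φ : Profile n → (Fin n ≃ Fin n)) : Prop :=
  ∀ p, InDomain Dm Dw p →
    ¬ ∃ (p' : Profile n) (S : Set (Fin n ⊕ Fin n)),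
      InDomain Dm Dw p' ∧
      (∀ m, Sum.inl m ∉ S → p'.1 m = p.1 m) ∧
      (∀ w, Sum.inr w ∉ S → p'.2 w = p.2 w) ∧
      (∀ m, Sum.inl m ∈ S → MWeakBetter p (φ p) (φ p') m) ∧
      (∀ w, Sum.inr w ∈ S → WWeakBetter p (φ p) (φ p') w) ∧
      ((∃ m, Sum.inl m ∈ S ∧ p.1 m (φ p' m) (φ p m)) ∨
       (∃ w, Sum.inr w ∈ S ∧ p.2 w ((φ p').symm w) ((φ p).symm w)))

/-!
A tree with at least five vertices has either a vertex with three neighbours or a path on five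
vertices, and either one forces two admissible preferences to violate the rotation property.
Two such violations, one on each side of the market, are glued along two men and two women with
opposed interests, while all other agents are matched to mutual first choices. The resulting
profile has only two candidates for a stable matching. In one of them some man can start a rejection
cycle which ends with his own partner again, but improves the match of the first woman he proposes
to, so these two form a manipulating coalition. In the other one some woman can do the same.
-/

section Rotation

variable {X : Type*} {G : SimpleGraph X} {D : Set (X → X → Prop)} {P P' : X → X → Prop}

/-- Two preferences `P`, `P'` violating the rotation property along the alternatives `w`, where `P'`
moreover ranks `w 2` above `w 1`. -/
structure IsRotation (P P' : X → X → Prop) (w : Fin 4 → X) : Prop where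
  chain : ∀ ⦃i j⦄, i < j → P (w i) (w j)
  two_zero : P' (w 2) (w 0)
  two_one : P' (w 2) (w 1)
  zero_three : P' (w 0) (w 3)

/-- Some two preferences in `D` form a rotation: the strong failure of the rotation property from
which manipulable profiles are built. -/
def HasRotation (D : Set (X → X → Prop)) : Prop :=
  ∃ P ∈ D, ∃ P' ∈ D, ∃ w, IsRotation P P' w

theorem IsPref.ne (hP : IsPref P) {x y : X} (h : P x y) : x ≠ y := by
  have : IsStrictTotalOrder X P := hP
  exact ne_of_irrefl h

theorem IsPref.trans (hP : IsPref P) {x y z : X} (hxy : P x y) (hyz : P y z) : P x z := by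
  have : IsStrictTotalOrder X P := hP
  exact _root_.trans hxy hyz

theorem IsPref.rel_or_rel_of_ne (hP : IsPref P) {x y : X} (h : x ≠ y) : P x y ∨ P y x := by
  have : IsStrictTotalOrder X P := hP
  simpa [h] using trichotomous_of P x y

theorem IsPref.exists_chain_of_two_lt_ncard (hP : IsPref P) {s : Set X} (hs : 2 < s.ncard) :
    ∃ x ∈ s, ∃ y ∈ s, ∃ z ∈ s, P x y ∧ P y z := by
  obtain ⟨x, y, z, hx, hy, hz, hxy, hxz, hyz⟩ :=
    (Set.two_lt_ncard_iff (Set.finite_of_ncard_pos (by lia))).1 hs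
  have := hP.rel_or_rel_of_ne hxy
  have := hP.rel_or_rel_of_ne hxz
  have := hP.rel_or_rel_of_ne hyz
  grind

theorem IsRotation.injective {w : Fin 4 → X} (h : IsRotation P P' w) (hP : IsPref P) :
    Function.Injective w :=
  .of_lt_imp_ne fun _ _ hij ↦ hP.ne (h.chain hij)

theorem isRotation_of_topOf {x y z t : X} (hP : IsPref P) (hxy : P x y) (hyz : P y z) (hzt : P z t)
    (hz : TopOf P' z) (hxt : P' x t) : IsRotation P P' ![x, y, z, t] where
  chain := by
    have : IsStrictTotalOrder X P := hP
    refine (Fin.liftFun_iff_succ P).2 fun i ↦ ?_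
    fin_cases i
    exacts [hxy, hyz, hzt]
  two_zero := hz x (hP.ne (hP.trans hxy hyz))
  two_one := hz y (hP.ne hyz)
  zero_three := hxt

theorem onPath_of_mem_support (hG : G.IsTree) {a x y : X} {p : G.Walk x y} (hp : p.IsPath)
    (ha : a ∈ p.support) : OnPath G a x y :=
  fun _ hq ↦ (hG.existsUnique_path x y).unique hp hq ▸ ha

theorem SPTree.rel_getVert (hP : SPTree G P) (hG : G.IsTree) {u v : X} (hu : TopOf P u)
    {p : G.Walk u v} (hp : p.IsPath) {i j : ℕ} (hij : i < j) (hj : j ≤ p.length) :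
    P (p.getVert i) (p.getVert j) := by
  have hmem : p.getVert i ∈ (p.take j).support := by
    simpa [hij.le] using (p.take j).getVert_mem_support i
  have hne : p.getVert i ≠ p.getVert j := fun h ↦
    hij.ne (hp.getVert_injOn (hij.le.trans hj) hj h)
  exact (hP u _ _ hu (onPath_of_mem_support hG (hp.take j) hmem)).resolve_left hne

theorem hasRotation_of_two_lt_ncard_neighborSet (hD : ∀ P ∈ D, IsPref P) (hr : Rich D)
    (hG : G.IsTree) (hsp : ∀ P ∈ D, SPTree G P) {c : X} (hc : 2 < (G.neighborSet c).ncard) :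
    HasRotation D := by
  obtain ⟨P, hP, hPc⟩ := hr c
  obtain ⟨x, hx, y, hy, z, hz, hxy, hyz⟩ := (hD P hP).exists_chain_of_two_lt_ncard hc
  obtain ⟨P', hP', hPy⟩ := hr y
  have hcy : G.Adj c y := hy
  have hcz : G.Adj c z := hz
  let p : G.Walk y z := .cons hcy.symm (.cons hcz .nil)
  have hp : p.IsPath := by
    simp [p, SimpleGraph.Walk.isPath_def, hcy.ne', hcz.ne, (hD P hP).ne hyz]
  have hrel : P' c z := (hsp P' hP').rel_getVert hG hPy hp (i := 1) (j := 2) one_lt_two le_rfl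
  exact ⟨P, hP, P', hP', _, isRotation_of_topOf (hD P hP) (hPc x hx.ne') hxy hyz hPy hrel⟩

theorem hasRotation_of_isPath_of_topOf (hD : ∀ P ∈ D, IsPref P) (hr : Rich D) (hG : G.IsTree)
    (hsp : ∀ P ∈ D, SPTree G P) {u v : X} {p : G.Walk u v} (hp : p.IsPath) (hlen : 2 < p.length)
    (hP' : P' ∈ D) (htop : TopOf P' (p.getVert 2)) (huv : P' u v) : HasRotation D := by
  obtain ⟨P, hP, hPu⟩ := hr u
  have hrel {i j : ℕ} (hij : i < j) (hj : j ≤ p.length) : P (p.getVert i) (p.getVert j) :=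
    (hsp P hP).rel_getVert hG hPu hp hij hj
  have h01 : P u (p.getVert 1) := by simpa using hrel zero_lt_one (by lia)
  have h2v : P (p.getVert 2) v := by simpa using hrel hlen le_rfl
  exact ⟨P, hP, P', hP', _,
    isRotation_of_topOf (hD P hP) h01 (hrel one_lt_two hlen.le) h2v htop huv⟩

theorem hasRotation_of_isPath (hD : ∀ P ∈ D, IsPref P) (hr : Rich D) (hG : G.IsTree)
    (hsp : ∀ P ∈ D, SPTree G P) {u v : X} {p : G.Walk u v} (hp : p.IsPath) (hlen : p.length = 4) :
    HasRotation D := by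
  obtain ⟨P', hP', htop⟩ := hr (p.getVert 2)
  have huv : u ≠ v := by
    rintro rfl
    have := (SimpleGraph.Walk.isPath_iff_nil.1 hp).length_eq_zero
    lia
  rcases (hD P' hP').rel_or_rel_of_ne huv with h | h
  · exact hasRotation_of_isPath_of_topOf hD hr hG hsp hp (by lia) hP' htop h
  · refine hasRotation_of_isPath_of_topOf hD hr hG hsp hp.reverse (by simp [hlen]) hP' ?_ h
    simpa [SimpleGraph.Walk.getVert_reverse, hlen] using htop

theorem two_lt_ncard_neighborSet_getVert [Finite X] {u v y : X} {p : G.Walk u v} (hp : p.IsPath)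
    {i : ℕ} (hi₀ : i ≠ 0) (hi : i < p.length) (hy : G.Adj (p.getVert i) y) (hyp : y ∉ p.support) :
    2 < (G.neighborSet (p.getVert i)).ncard := by
  obtain ⟨j, rfl⟩ := Nat.exists_eq_succ_of_ne_zero hi₀
  have hprev : G.Adj (p.getVert (j + 1)) (p.getVert j) := (p.adj_getVert_succ (by lia)).symm
  have hne : p.getVert j ≠ p.getVert (j + 2) := fun h ↦ by
    have := hp.getVert_injOn (show j ≤ p.length by lia) (show j + 2 ≤ p.length by lia) h
    lia
  have hmem (k : ℕ) : p.getVert k ≠ y := fun h ↦ hyp (h ▸ p.getVert_mem_support k)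
  exact (Set.two_lt_ncard_iff (Set.toFinite _)).2
    ⟨_, _, y, hprev, p.adj_getVert_succ hi, hy, hne, hmem _, hmem _⟩

theorem exists_isHamiltonian_of_ncard_neighborSet_le_two [Finite X] [DecidableEq X]
    (hG : G.Connected) (hdeg : ∀ c, (G.neighborSet c).ncard ≤ 2) :
    ∃ (u v : X) (p : G.Walk u v), p.IsHamiltonian := by
  have := hG.nonempty
  obtain ⟨u, v, p, hp, hmax⟩ :=
    SimpleGraph.Walk.exists_isPath_forall_isPath_length_le_length G
  refine ⟨u, v, p, hp.isHamiltonian_iff.2 fun w ↦ by_contra fun hw ↦ ?_⟩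
  obtain ⟨q⟩ := hG.preconnected u w
  obtain ⟨⟨⟨x, y⟩, hxy⟩, -, hx, hy⟩ :=
    q.exists_boundary_dart {x | x ∈ p.support} p.start_mem_support hw
  obtain ⟨i, rfl, hi⟩ := SimpleGraph.Walk.mem_support_iff_exists_getVert.1 hx
  have hi₀ : i ≠ 0 := by
    rintro rfl
    have hadj : G.Adj y u := by simpa using hxy.symm
    simpa using hmax _ _ _ (hp.cons (h := hadj) hy)
  have hil : i ≠ p.length := by
    rintro rfl
    have hadj : G.Adj v y := by simpa using hxy
    simpa using hmax _ _ _ (hp.concat hy hadj)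
  exact (hdeg _).not_gt (two_lt_ncard_neighborSet_getVert hp hi₀ (hi.lt_of_ne hil) hxy hy)

theorem hasRotation_of_five_le_card [Fintype X] (hX : 5 ≤ Fintype.card X)
    (hD : ∀ P ∈ D, IsPref P) (hr : Rich D) (hG : G.IsTree) (hsp : ∀ P ∈ D, SPTree G P) :
    HasRotation D := by
  classical
  by_cases hdeg : ∀ c, (G.neighborSet c).ncard ≤ 2
  · obtain ⟨u, v, p, hp⟩ := exists_isHamiltonian_of_ncard_neighborSet_le_two hG.connected hdeg
    have hlen := hp.length_eq
    exact hasRotation_of_isPath hD hr hG hsp (hp.isPath.take 4)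
      (by rw [SimpleGraph.Walk.take_length]; lia)
  · push Not at hdeg
    obtain ⟨c, hc⟩ := hdeg
    exact hasRotation_of_two_lt_ncard_neighborSet hD hr hG hsp hc

end Rotation

theorem image_eq_image_of_eqOn_compl {α β : Type*} {f g : α → β} (hf : Function.Bijective f)
    (hg : Function.Bijective g) {s : Set α} (h : Set.EqOn f g sᶜ) : f '' s = g '' s := by
  simpa [Set.image_compl_eq hf, Set.image_compl_eq hg] using h.image_eq

section Market

variable {n : ℕ} {Dm Dw : Set (PrefRel n)} {φ : Profile n → (Fin n ≃ Fin n)}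
  {p : Profile n} {μ ν : Fin n ≃ Fin n}

/-- Man `m` and woman `w` are each other's first choice. -/
def MutualTop (p : Profile n) (m w : Fin n) : Prop :=
  TopOf (p.1 m) w ∧ TopOf (p.2 w) m

theorem StableAt.not_prefers (h : StableAt p μ) {m m' : Fin n} (hm : p.1 m (μ m') (μ m)) :
    ¬ p.2 (μ m') m m' := fun hw ↦
  h m (μ m') ⟨hm, by simpa using hw⟩

theorem StableAt.apply_eq_of_mutualTop (h : StableAt p μ) {m w : Fin n} (hmw : MutualTop p m w) :
    μ m = w := by
  by_contra hne
  exact h m w ⟨hmw.1 _ hne, hmw.2 _ fun hm ↦ hne ((Equiv.symm_apply_eq μ).1 hm).symm⟩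

theorem InDomain.swap (hp : InDomain Dm Dw p) : InDomain Dw Dm p.swap :=
  And.symm hp

theorem InDomain.update_left (hp : InDomain Dm Dw p) {P : PrefRel n} (hP : P ∈ Dm) (k : Fin n) :
    InDomain Dm Dw (Function.update p.1 k P, p.2) :=
  ⟨(Function.forall_update_iff p.1 fun _ Q ↦ Q ∈ Dm).2 ⟨hP, fun m _ ↦ hp.1 m⟩, hp.2⟩

theorem GSP.not_prefers_symm_of_update_apply_eq (hφ : GSP Dm Dw φ) (hp : InDomain Dm Dw p)
    {P : PrefRel n} (hP : P ∈ Dm) {k : Fin n}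
    (hk : φ (Function.update p.1 k P, p.2) k = φ p k) (w : Fin n) :
    ¬ p.2 w ((φ (Function.update p.1 k P, p.2)).symm w) ((φ p).symm w) := fun hw ↦ by
  refine hφ p hp ⟨_, {Sum.inl k, Sum.inr w}, hp.update_left hP k, fun m hm ↦ ?_, fun _ _ ↦ rfl,
    fun m hm ↦ ?_, fun w' hw' ↦ ?_, Or.inr ⟨w, by simp, hw⟩⟩
  · exact Function.update_of_ne (by simpa using hm) _ _
  · obtain rfl : m = k := by simpa using hm
    exact Or.inl hk
  · obtain rfl : w' = w := by simpa using hw'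
    exact Or.inr hw

/-- The matching rule on the market with the two sides exchanged, used to transfer statements about
men to women. -/
def swapRule (φ : Profile n → (Fin n ≃ Fin n)) : Profile n → (Fin n ≃ Fin n) :=
  fun p ↦ (φ p.swap).symm

theorem StableRule.swapRule (h : StableRule Dm Dw φ) : StableRule Dw Dm (swapRule φ) :=
  fun p hp w m hb ↦ h p.swap hp.swap m w hb.symm

theorem GSP.swapRule (h : GSP Dm Dw φ) : GSP Dw Dm (swapRule φ) := by
  rintro p hp ⟨p', S, hp', hm, hw, hmS, hwS, hstrict⟩
  exact h p.swap hp.swap ⟨p'.swap, Sum.swap ⁻¹' S, hp'.swap, hw, hm, hwS, hmS, hstrict.symm⟩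

/-- Man `k` can start a rejection cycle at the matching `μ`: if he proposes to `μ i`, then she
rejects `i`, who proposes to `μ j`; she rejects `j`, who proposes to `μ i`; and she rejects `k`. No
other agent takes part. -/
structure IsRejectionCycle (p : Profile n) (μ : Fin n ≃ Fin n) (i j k : Fin n) : Prop where
  ne_fst_snd : i ≠ j
  ne_fst_thd : i ≠ k
  ne_snd_thd : j ≠ k
  man_fst : p.1 i (μ j) (μ k)
  man_snd : p.1 j (μ i) (μ k)
  woman_fst_snd_thd : p.2 (μ i) j k
  woman_fst_thd_fst : p.2 (μ i) k i
  woman_snd_fst_snd : p.2 (μ j) i j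
  woman_snd_fst_thd : p.2 (μ j) i k
  mutualTop : ∀ m, m ≠ i → m ≠ j → m ≠ k → MutualTop p m (μ m)

namespace IsRejectionCycle

variable {i j k : Fin n} {P : PrefRel n}

theorem apply_mem_of_stableAt_update (h : IsRejectionCycle p μ i j k)
    (hν : StableAt (Function.update p.1 k P, p.2) ν) {m : Fin n} (hm : m ∈ ({i, j, k} : Set _)) :
    ν m ∈ ({μ i, μ j, μ k} : Set _) := by
  have heq : Set.EqOn ν μ {i, j, k}ᶜ := fun m hm ↦ by
    simp only [Set.mem_compl_iff, Set.mem_insert_iff, Set.mem_singleton_iff, not_or] at hm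
    refine hν.apply_eq_of_mutualTop ?_
    simpa [MutualTop, hm.2.2] using h.mutualTop m hm.1 hm.2.1 hm.2.2
  have himage := image_eq_image_of_eqOn_compl ν.bijective μ.bijective heq
  rw [Set.image_insert_eq (f := μ), Set.image_pair] at himage
  exact himage ▸ Set.mem_image_of_mem ν hm

theorem apply_eq_of_stableAt_update (h : IsRejectionCycle p μ i j k) (hP : TopOf P (μ i))
    (hν : StableAt (Function.update p.1 k P, p.2) ν) : ν j = μ i ∧ ν k = μ k := by
  have hi := h.apply_mem_of_stableAt_update hν (m := i) (by simp)
  have hj := h.apply_mem_of_stableAt_update hν (m := j) (by simp)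
  have hk := h.apply_mem_of_stableAt_update hν (m := k) (by simp)
  simp only [Set.mem_insert_iff, Set.mem_singleton_iff] at hi hj hk
  have hij := ν.injective.ne h.ne_fst_snd
  have hik := ν.injective.ne h.ne_fst_thd
  have hjk := ν.injective.ne h.ne_snd_thd
  have block_i {m} (hm : p.1 i (ν m) (ν i)) : ¬ p.2 (ν m) i m :=
    hν.not_prefers (by simpa [h.ne_fst_thd] using hm)
  have block_j {m} (hm : p.1 j (ν m) (ν j)) : ¬ p.2 (ν m) j m :=
    hν.not_prefers (by simpa [h.ne_snd_thd] using hm)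
  have block_k {m} (hm : P (ν m) (ν k)) : ¬ p.2 (ν m) k m :=
    hν.not_prefers (by simpa using hm)
  have hi' : ν i ≠ μ i := fun hi' ↦
    block_k (hi' ▸ hP _ (hi' ▸ hik.symm)) (hi' ▸ h.woman_fst_thd_fst)
  have hk' : ν k ≠ μ i := fun hk' ↦ by
    have hj' : ν j ≠ μ k := fun hj' ↦
      block_j (hk' ▸ hj' ▸ h.man_snd) (hk' ▸ h.woman_fst_snd_thd)
    have hjj : ν j = μ j := by grind
    have hik : ν i = μ k := by grind
    exact block_i (hjj ▸ hik ▸ h.man_fst) (hjj ▸ h.woman_snd_fst_snd)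
  have hji : ν j = μ i := by grind
  refine ⟨hji, by_contra fun hkk ↦ ?_⟩
  have hkj : ν k = μ j := by grind
  have hik : ν i = μ k := by grind
  exact block_i (hkj ▸ hik ▸ h.man_fst) (hkj ▸ h.woman_snd_fst_thd)

theorem not_gsp (hDw : ∀ P ∈ Dw, IsPref P) (hr : Rich Dm) (hst : StableRule Dm Dw φ)
    (hp : InDomain Dm Dw p) (h : IsRejectionCycle p (φ p) i j k) : ¬ GSP Dm Dw φ := fun hφ ↦ by
  obtain ⟨P, hP, htop⟩ := hr (φ p i)
  obtain ⟨hj, hk⟩ := h.apply_eq_of_stableAt_update htop (hst _ (hp.update_left hP k))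
  refine hφ.not_prefers_symm_of_update_apply_eq hp hP hk (φ p i) ?_
  rw [← hj, Equiv.symm_apply_apply, hj, Equiv.symm_apply_apply]
  exact (hDw _ (hp.2 _)).trans h.woman_fst_snd_thd h.woman_fst_thd_fst

theorem not_gsp_of_swap (hDm : ∀ P ∈ Dm, IsPref P) (hr : Rich Dw) (hst : StableRule Dm Dw φ)
    (hp : InDomain Dm Dw p) (h : IsRejectionCycle p.swap (φ p).symm i j k) : ¬ GSP Dm Dw φ :=
  fun hφ ↦ not_gsp (p := p.swap) hDm hr hst.swapRule hp.swap h hφ.swapRule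

end IsRejectionCycle

/-- The men `m 0`, `m 2` and the women `w 2`, `w 0` have opposed rotation preferences, and `e` pairs
all other agents with their mutual first choices. -/
structure IsOpposedRotations (p : Profile n) (m w : Fin 4 → Fin n) (e : Fin n ≃ Fin n) : Prop where
  men : IsRotation (p.1 (m 2)) (p.1 (m 0)) w
  women : IsRotation (p.2 (w 0)) (p.2 (w 2)) m
  apply_eq : ∀ i, e (m i) = w (i + 2)
  mutualTop : ∀ i, i ≠ m 0 → i ≠ m 2 → MutualTop p i (e i)

namespace IsOpposedRotations

variable {m w : Fin 4 → Fin n} {e : Fin n ≃ Fin n}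

theorem apply_eq_of_stableAt (h : IsOpposedRotations p m w e) (hμ : StableAt p μ) {i : Fin n}
    (h0 : i ≠ m 0) (h2 : i ≠ m 2) : μ i = e i :=
  hμ.apply_eq_of_mutualTop (h.mutualTop i h0 h2)

theorem apply_eq_or_of_stableAt (h : IsOpposedRotations p m w e)
    (hμ : StableAt p μ) :
    μ (m 0) = w 2 ∧ μ (m 2) = w 0 ∨ μ (m 0) = w 0 ∧ μ (m 2) = w 2 := by
  have heq : Set.EqOn μ e {m 0, m 2}ᶜ := fun i hi ↦ by
    simp only [Set.mem_compl_iff, Set.mem_insert_iff, Set.mem_singleton_iff, not_or] at hi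
    exact h.apply_eq_of_stableAt hμ hi.1 hi.2
  have himage := image_eq_image_of_eqOn_compl μ.bijective e.bijective heq
  rw [Set.image_pair, Set.image_pair, h.apply_eq, h.apply_eq] at himage
  simpa [Set.pair_eq_pair_iff] using himage

theorem isRejectionCycle (h : IsOpposedRotations p m w e) (hm : Function.Injective m)
    (hμ : StableAt p μ) (h0 : μ (m 0) = w 2) (h2 : μ (m 2) = w 0) :
    IsRejectionCycle p μ (m 2) (m 0) (m 1) := by
  have h1 : μ (m 1) = w 3 := by
    rw [h.apply_eq_of_stableAt hμ (hm.ne (by decide)) (hm.ne (by decide)), h.apply_eq]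
    rfl
  constructor
  case ne_fst_snd | ne_fst_thd | ne_snd_thd => exact hm.ne (by decide)
  case man_fst => simpa only [h0, h1] using h.men.chain (i := 2) (j := 3) (by decide)
  case man_snd => simpa only [h2, h1] using h.men.zero_three
  case woman_fst_snd_thd => simpa only [h2] using h.women.chain (i := 0) (j := 1) (by decide)
  case woman_fst_thd_fst => simpa only [h2] using h.women.chain (i := 1) (j := 2) (by decide)
  case woman_snd_fst_snd => simpa only [h0] using h.women.two_zero
  case woman_snd_fst_thd => simpa only [h0] using h.women.two_one
  case mutualTop =>
    intro i hi2 hi0 _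
    exact h.apply_eq_of_stableAt hμ hi0 hi2 ▸ h.mutualTop i hi0 hi2

theorem isRejectionCycle_swap (h : IsOpposedRotations p m w e) (hm : Function.Injective m)
    (hw : Function.Injective w) (hμ : StableAt p μ) (h0 : μ (m 0) = w 0) (h2 : μ (m 2) = w 2) :
    IsRejectionCycle p.swap μ.symm (w 2) (w 0) (w 1) := by
  have h3 : μ (m 3) = w 1 := by
    rw [h.apply_eq_of_stableAt hμ (hm.ne (by decide)) (hm.ne (by decide)), h.apply_eq]
    rfl
  have h0' : μ.symm (w 0) = m 0 := by simp [← h0]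
  have h1' : μ.symm (w 1) = m 3 := by simp [← h3]
  have h2' : μ.symm (w 2) = m 2 := by simp [← h2]
  constructor
  case ne_fst_snd | ne_fst_thd | ne_snd_thd => exact hw.ne (by decide)
  case man_fst => simpa only [Prod.fst_swap, h0', h1'] using h.women.zero_three
  case man_snd =>
    simpa only [Prod.fst_swap, h2', h1'] using h.women.chain (i := 2) (j := 3) (by decide)
  case woman_fst_snd_thd =>
    simpa only [Prod.snd_swap, h2'] using h.men.chain (i := 0) (j := 1) (by decide)
  case woman_fst_thd_fst =>
    simpa only [Prod.snd_swap, h2'] using h.men.chain (i := 1) (j := 2) (by decide)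
  case woman_snd_fst_snd => simpa only [Prod.snd_swap, h0'] using h.men.two_zero
  case woman_snd_fst_thd => simpa only [Prod.snd_swap, h0'] using h.men.two_one
  case mutualTop =>
    intro x hx2 hx0 _
    obtain ⟨i, rfl⟩ := μ.surjective x
    have hi0 : i ≠ m 0 := fun hi ↦ hx0 (hi ▸ h0)
    have hi2 : i ≠ m 2 := fun hi ↦ hx2 (hi ▸ h2)
    rw [Equiv.symm_apply_apply, h.apply_eq_of_stableAt hμ hi0 hi2]
    exact (h.mutualTop i hi0 hi2).symm

theorem not_gsp (h : IsOpposedRotations p m w e) (hDm : ∀ P ∈ Dm, IsPref P)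
    (hDw : ∀ P ∈ Dw, IsPref P) (hrm : Rich Dm) (hrw : Rich Dw) (hst : StableRule Dm Dw φ)
    (hp : InDomain Dm Dw p) : ¬ GSP Dm Dw φ := by
  have hμ := hst p hp
  have hm : Function.Injective m := h.women.injective (hDw _ (hp.2 _))
  have hw : Function.Injective w := h.men.injective (hDm _ (hp.1 _))
  rcases h.apply_eq_or_of_stableAt hμ with ⟨h0, h2⟩ | ⟨h0, h2⟩
  · exact (h.isRejectionCycle hm hμ h0 h2).not_gsp hDw hrm hst hp
  · exact (h.isRejectionCycle_swap hm hw hμ h0 h2).not_gsp_of_swap hDm hrw hst hp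

end IsOpposedRotations

theorem exists_isOpposedRotations (hDm : ∀ P ∈ Dm, IsPref P) (hDw : ∀ P ∈ Dw, IsPref P)
    (hrm : Rich Dm) (hrw : Rich Dw) (hm : HasRotation Dm) (hw : HasRotation Dw) :
    ∃ p, InDomain Dm Dw p ∧ ∃ m w e, IsOpposedRotations p m w e := by
  obtain ⟨P, hP, P', hP', w, hrot_w⟩ := hm
  obtain ⟨Q, hQ, Q', hQ', m, hrot_m⟩ := hw
  have hm : Function.Injective m := hrot_m.injective (hDw Q hQ)
  have hw : Function.Injective w := hrot_w.injective (hDm P hP)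
  obtain ⟨e, he⟩ := Equiv.Perm.exists_extending_pair m (fun i ↦ w (i + 2)) hm
    (hw.comp (add_left_injective 2))
  choose T hT hTtop using hrm
  choose U hU hUtop using hrw
  have hparked : InDomain Dm Dw (fun i ↦ T (e i), fun x ↦ U (e.symm x)) :=
    ⟨fun i ↦ hT (e i), fun x ↦ hU (e.symm x)⟩
  let men := Function.update (Function.update (fun i ↦ T (e i)) (m 0) P') (m 2) P
  let women := Function.update (Function.update (fun x ↦ U (e.symm x)) (w 2) Q') (w 0) Q
  have h02 : m 0 ≠ m 2 := hm.ne (by decide)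
  have h20 : w 2 ≠ w 0 := hw.ne (by decide)
  refine ⟨(men, women), ?_, m, w, e, by simpa [men, h02] using hrot_w,
    by simpa [women, h20] using hrot_m, he, fun i h0 h2 ↦ ?_⟩
  · have hmen := (hparked.update_left hP' (m 0)).update_left hP (m 2)
    exact ((hmen.swap.update_left hQ' (w 2)).update_left hQ (w 0)).swap
  · have hw2 : e i ≠ w 2 := fun h ↦ h0 (e.injective (h.trans (he 0).symm))
    have hw0 : e i ≠ w 0 := fun h ↦ h2 (e.injective (h.trans (he 2).symm))
    have hi : men i = T (e i) := by simp [men, h0, h2]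
    have hei : women (e i) = U i := by simp [women, hw2, hw0]
    exact ⟨show TopOf (men i) (e i) from hi ▸ hTtop (e i),
      show TopOf (women (e i)) i from hei ▸ hUtop i⟩

theorem not_gsp_of_hasRotation (hDm : ∀ P ∈ Dm, IsPref P) (hDw : ∀ P ∈ Dw, IsPref P)
    (hrm : Rich Dm) (hrw : Rich Dw) (hst : StableRule Dm Dw φ) (hm : HasRotation Dm)
    (hw : HasRotation Dw) : ¬ GSP Dm Dw φ := by
  obtain ⟨p, hp, m, w, e, h⟩ := exists_isOpposedRotations hDm hDw hrm hrw hm hw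
  exact h.not_gsp hDm hDw hrm hrw hst hp

end Market

/-- on a rich anonymous tree-single-peaked domain with n ≥ 5, no stable
matching rule is group strategy-proof. -/
theorem stmt16 {n : ℕ} (hn : 5 ≤ n) (Dm Dw : Set (PrefRel n))
    (hDm : ∀ P ∈ Dm, IsPref P) (hDw : ∀ P ∈ Dw, IsPref P)
    (hrm : Rich Dm) (hrw : Rich Dw)
    (Gw : SimpleGraph (Fin n)) (hGw : Gw.IsTree) (hspm : ∀ P ∈ Dm, SPTree Gw P)
    (Gm : SimpleGraph (Fin n)) (hGm : Gm.IsTree) (hspw : ∀ P ∈ Dw, SPTree Gm P)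
    (φ : Profile n → (Fin n ≃ Fin n)) (hst : StableRule Dm Dw φ) :
    ¬ GSP Dm Dw φ := by
  have hn' : 5 ≤ Fintype.card (Fin n) := by simpa using hn
  have hm : HasRotation Dm := hasRotation_of_five_le_card hn' hDm hrm hGw hspm
  have hw : HasRotation Dw := hasRotation_of_five_le_card hn' hDw hrw hGm hspw
  exact not_gsp_of_hasRotation hDm hDw hrm hrw hst hm hw
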